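/- In any quantum-Wajsberg algebra X, the identity x→(x∧y) = x→y holds for all x, y ∈ X (property (QW1)). -/

import Mathlib

/-- A bounded involutive BE algebra. -/
class InvBE (X : Type*) where
  imp : X → X → X
  one : X
  zero : X
  be1 : ∀ x : X, imp x x = one
  be2 : ∀ x : X, imp x one = one
  be3 : ∀ x : X, imp one x = x
  be4 : ∀ x y z : X, imp x (imp y z) = imp y (imp x z)
  bound : ∀ x : X, imp zero x = one
  dn : ∀ x : X, imp (imp x zero) zero = x

namespace InvBE

variable {X : Type*} [InvBE X]

/-- Negation: `x* = x → 0`. -/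
def neg (x : X) : X := imp x zero

/-- `x ∨ y = (x → y) → y`. -/
def sup (x y : X) : X := imp (imp x y) y

/-- `x ∧ y = ((x* → y*) → y*)*`. -/
def inf (x y : X) : X := neg (imp (imp (neg x) (neg y)) (neg y))

/-- `x ≤ y` iff `x → y = 1`. -/
def le (x y : X) : Prop := imp x y = one

/-- `x ≤_Q y` iff `x = x ∧ y`. -/
def leQ (x y : X) : Prop := x = inf x y

end InvBE

/-!
Since `1 ∧ a = a = a ∧ 1`, the axiom at `y = 1` reads `x → (x ∧ (z ∧ x)) = x → z`. In any
involutive BE algebra `z ∧ x ≤ x`, and `v ≤ x` forces `x ∧ v = v`, so this becomes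
`x → (z ∧ x) = x → z`. The axiom at `z = 1` reads `x → ((x ∧ y) ∧ x) = x → y`, whose left side
is `x → (x ∧ y)` by the previous identity applied to `x ∧ y`.
-/

namespace InvBE

variable {X : Type*} [InvBE X]

protected theorem neg_neg (x : X) : neg (neg x) = x := dn x

theorem neg_one : neg (one : X) = zero := be3 zero

theorem imp_neg_comm (x y : X) : imp x (neg y) = imp y (neg x) := be4 x y zero

theorem neg_imp_neg (x y : X) : imp (neg x) (neg y) = imp y x := by
  rw [imp_neg_comm, InvBE.neg_neg]

protected theorem le_sup_right (x y : X) : le y (sup x y) := by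
  rw [le, sup, be4, be1, be2]

protected theorem neg_le_of_neg_le {x y : X} (h : le (neg x) y) : le (neg y) x := by
  rwa [le, ← neg_imp_neg, InvBE.neg_neg]

protected theorem inf_le_right (x y : X) : le (inf x y) y :=
  InvBE.neg_le_of_neg_le (InvBE.le_sup_right (neg x) (neg y))

theorem inf_eq_right_of_le {x y : X} (h : le y x) : inf x y = y := by
  rw [le] at h
  rw [inf, neg_imp_neg, h, be3, InvBE.neg_neg]

theorem inf_inf_self_right (x y : X) : inf x (inf y x) = inf y x :=
  inf_eq_right_of_le (InvBE.inf_le_right y x)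

theorem one_inf (x : X) : inf one x = x := inf_eq_right_of_le (be2 x)

theorem inf_one (x : X) : inf x one = x := by
  rw [inf, neg_one, dn, InvBE.neg_neg]

/-- The axiom (QW), which singles out the quantum-Wajsberg algebras among the involutive BE
algebras. -/
def IsQuantumWajsberg (X : Type*) [InvBE X] : Prop :=
  ∀ x y z : X, imp x (inf (inf x y) (inf z x)) = inf (imp x y) (imp x z)

namespace IsQuantumWajsberg

theorem imp_inf_self_right (qw : IsQuantumWajsberg X) (x y : X) :
    imp x (inf y x) = imp x y :=
  calc
    imp x (inf y x) = imp x (inf (inf x one) (inf y x)) := by rw [inf_one, inf_inf_self_right]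
    _ = inf (imp x one) (imp x y) := qw x one y
    _ = imp x y := by rw [be2, one_inf]

theorem imp_inf_self_left (qw : IsQuantumWajsberg X) (x y : X) :
    imp x (inf x y) = imp x y :=
  calc
    imp x (inf x y) = imp x (inf (inf x y) x) := (qw.imp_inf_self_right x (inf x y)).symm
    _ = imp x (inf (inf x y) (inf one x)) := by rw [one_inf]
    _ = inf (imp x y) (imp x one) := qw x y one
    _ = imp x y := by rw [be2, inf_one]

end IsQuantumWajsberg

end InvBE

open InvBE in
theorem stmt_2 {X : Type*} [InvBE X]
    (qw : ∀ x y z : X, imp x (inf (inf x y) (inf z x)) = inf (imp x y) (imp x z)) :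
    ∀ x y : X, imp x (inf x y) = imp x y :=
  IsQuantumWajsberg.imp_inf_self_left qw
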